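/- Fix real numbers x0 < x1 and let ζ : ℝ → ℝ be continuously differentiable with ζ(x) > 0 for all x ∈ [x0, x1]; set α = −ζ′/(2ζ). For n ≥ 1 set Δ_n = (x1 − x0)/(n + 1), y_{n,j} = x0 + j·Δ_n (1 ≤ j ≤ n), and r_{n,j} = ( ζ(y_{n,j} − Δ_n/2) − ζ(y_{n,j} + Δ_n/2) ) / ( ζ(y_{n,j} − Δ_n/2) + ζ(y_{n,j} + Δ_n/2) ). For each n let Ψ_{n,j}, Ψ_{n,j}^* (0 ≤ j ≤ n) be the polynomials defined by Ψ_{n,0} = Ψ_{n,0}^* = 1, Ψ_{n,j+1}(z) = z·Ψ_{n,j}(z) + r_{n,j+1}·Ψ_{n,j}^*(z), Ψ_{n,j+1}^*(z) = Ψ_{n,j}^*(z) + r_{n,j+1}·z·Ψ_{n,j}(z). Then for every Ω > 0, sup_{ω ∈ [−Ω, Ω]} | Ψ_{n,n}^*( e^{2iΔ_n ω} ) − E_α^{(x0,x1)}(ω) | → 0 as n → ∞; that is, the dual orthogonal polynomials evaluated at e^{2iΔ_n ω} converge to the harmonic exponential uniformly on compact subsets of ℝ. -/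

import Mathlib

open MeasureTheory

/-- The iterates `A_ω^j 𝟙` of the conjugate-linear Volterra operator
`A_ω f(t) = ∫_{x0}^t α(s) e^{2i(s−x0)ω} conj(f(s)) ds`. -/
noncomputable def Aiter (x0 : ℝ) (α : ℝ → ℝ) (ω : ℂ) : ℕ → ℝ → ℂ
  | 0 => fun _ => 1
  | j + 1 => fun t =>
      ∫ s in x0..t,
        (α s : ℂ) * Complex.exp (2 * Complex.I * ((s : ℂ) - (x0 : ℂ)) * ω)
          * (starRingEnd ℂ) (Aiter x0 α ω j s)

/-- The harmonic exponential `E_α^{(x0,y)}(ω) = Σ_{j≥0} A_ω^j 𝟙(y)`. -/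
noncomputable def harmE (x0 y : ℝ) (α : ℝ → ℝ) (ω : ℂ) : ℂ :=
  ∑' j : ℕ, Aiter x0 α ω j y

/-- The associated monic orthogonal polynomials on the unit circle with Verblunsky
coefficients `-r 1, …, -r n`, together with their duals:
`(opucPsi r j).1 = Ψ_j`, `(opucPsi r j).2 = Ψ_j^*`. -/
noncomputable def opucPsi (r : ℕ → ℝ) : ℕ → (ℂ → ℂ) × (ℂ → ℂ)
  | 0 => (fun _ => 1, fun _ => 1)
  | j + 1 =>
      (fun z => z * (opucPsi r j).1 z + (r (j + 1) : ℂ) * (opucPsi r j).2 z,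
       fun z => (opucPsi r j).2 z + (r (j + 1) : ℂ) * z * (opucPsi r j).1 z)


lemma phase_eq (x0 ω s : ℝ) :
    Complex.exp (2 * Complex.I * ((s : ℂ) - (x0 : ℂ)) * (ω : ℂ))
      = Complex.exp (Complex.I * ((2 * (s - x0) * ω : ℝ) : ℂ)) := by
  congr 1; push_cast; ring

lemma phase_norm (x0 ω s : ℝ) :
    ‖Complex.exp (2 * Complex.I * ((s : ℂ) - (x0 : ℂ)) * (ω : ℂ))‖ = 1 := by
  rw [phase_eq, mul_comm, Complex.norm_exp_ofReal_mul_I]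

lemma phase_lip (x0 ω s t : ℝ) :
    ‖Complex.exp (2 * Complex.I * ((s : ℂ) - (x0 : ℂ)) * (ω : ℂ))
      - Complex.exp (2 * Complex.I * ((t : ℂ) - (x0 : ℂ)) * (ω : ℂ))‖ ≤ 2 * |ω| * |s - t| := by
  have h : Complex.exp (2 * Complex.I * ((s : ℂ) - (x0 : ℂ)) * (ω : ℂ))
      - Complex.exp (2 * Complex.I * ((t : ℂ) - (x0 : ℂ)) * (ω : ℂ))
      = Complex.exp (2 * Complex.I * ((t : ℂ) - (x0 : ℂ)) * (ω : ℂ))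
        * (Complex.exp (Complex.I * ((2 * (s - t) * ω : ℝ) : ℂ)) - 1) := by
    rw [mul_sub (Complex.exp _), ← Complex.exp_add, mul_one]
    congr 2; push_cast; ring
  rw [h, norm_mul, phase_norm, one_mul]
  refine (Real.norm_exp_I_mul_ofReal_sub_one_le).trans (le_of_eq ?_)
  rw [Real.norm_eq_abs, abs_mul, abs_mul, abs_two]; ring

lemma aiter_cont (x0 : ℝ) (α : ℝ → ℝ) (hα : Continuous α) (ω : ℝ) (j : ℕ) :
    Continuous (Aiter x0 α ω j) := by
  induction j with
  | zero => exact continuous_const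
  | succ j ih =>
    have hc : Continuous (fun s : ℝ => (α s : ℂ)
        * Complex.exp (2 * Complex.I * ((s : ℂ) - (x0 : ℂ)) * ω)
          * (starRingEnd ℂ) (Aiter x0 α ω j s)) := by
      have := Complex.continuous_conj.comp ih
      have h2 : Continuous (fun s : ℝ => (starRingEnd ℂ) (Aiter x0 α ω j s)) := this
      fun_prop
    exact intervalIntegral.continuous_primitive (fun a b => hc.intervalIntegrable a b) x0

lemma aiter_bound (x0 : ℝ) (α : ℝ → ℝ) (C : ℝ)
    (hC : ∀ s, |α s| ≤ C) (ω : ℝ) (j : ℕ) :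
    ∀ t, x0 ≤ t → ‖Aiter x0 α ω j t‖ ≤ (C * (t - x0)) ^ j / (j.factorial : ℝ) := by
  have hC0 : 0 ≤ C := (abs_nonneg _).trans (hC 0)
  induction j with
  | zero => intro t ht; simp [Aiter]
  | succ j ih =>
    intro t ht
    have h1 : ‖Aiter x0 α ω (j + 1) t‖
        ≤ ∫ s in x0..t, C * ((C * (s - x0)) ^ j / (j.factorial : ℝ)) := by
      simp only [Aiter]
      refine intervalIntegral.norm_integral_le_of_norm_le ht ?_ ?_
      · refine Filter.Eventually.of_forall fun s hs => ?_
        rw [norm_mul, norm_mul, phase_norm, mul_one, RCLike.norm_conj, Complex.norm_real,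
          Real.norm_eq_abs]
        exact mul_le_mul (hC s) (ih s hs.1.le) (norm_nonneg _) hC0
      · apply Continuous.intervalIntegrable; fun_prop
    refine h1.trans (le_of_eq ?_)
    have h2 : ∀ s : ℝ, C * ((C * (s - x0)) ^ j / (j.factorial : ℝ))
        = (C ^ (j + 1) / (j.factorial : ℝ)) * (s - x0) ^ j := by
      intro s; rw [mul_pow]; ring
    simp_rw [h2]
    rw [intervalIntegral.integral_const_mul,
      intervalIntegral.integral_comp_sub_right (fun s : ℝ => s ^ j) x0, integral_pow]
    rw [Nat.factorial_succ, mul_pow]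
    push_cast
    have : (j.factorial : ℝ) ≠ 0 := by positivity
    have : (j : ℝ) + 1 ≠ 0 := by positivity
    field_simp
    simp

lemma aiter_bound' (x0 x1 : ℝ) (α : ℝ → ℝ) (C : ℝ)
    (hC : ∀ s, |α s| ≤ C) (ω : ℝ) (j : ℕ) (t : ℝ) (ht : t ∈ Set.Icc x0 x1) :
    ‖Aiter x0 α ω j t‖ ≤ (C * (x1 - x0)) ^ j / (j.factorial : ℝ) := by
  have hC0 : 0 ≤ C := (abs_nonneg _).trans (hC 0)
  refine (aiter_bound x0 α C hC ω j t ht.1).trans ?_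
  have := ht.1
  have := ht.2
  have : 0 ≤ t - x0 := by linarith
  gcongr

lemma harmE_norm (x0 x1 : ℝ) (α : ℝ → ℝ) (C : ℝ)
    (hC : ∀ s, |α s| ≤ C) (ω : ℝ) (t : ℝ) (ht : t ∈ Set.Icc x0 x1) :
    ‖harmE x0 t α ω‖ ≤ Real.exp (C * (x1 - x0)) := by
  rw [Real.exp_eq_exp_ℝ, NormedSpace.exp_eq_tsum_div]
  exact tsum_of_norm_bounded (Real.summable_pow_div_factorial _).hasSum
    (fun j => aiter_bound' x0 x1 α C hC ω j t ht)

lemma harmE_cont (x0 x1 : ℝ) (α : ℝ → ℝ) (hα : Continuous α) (C : ℝ)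
    (hC : ∀ s, |α s| ≤ C) (ω : ℝ) :
    ContinuousOn (fun t => harmE x0 t α ω) (Set.Icc x0 x1) := by
  exact continuousOn_tsum (fun j => (aiter_cont x0 α hα ω j).continuousOn)
    (Real.summable_pow_div_factorial _)
    (fun j t ht => aiter_bound' x0 x1 α C hC ω j t ht)

lemma harmE_eq (x0 x1 : ℝ) (α : ℝ → ℝ) (hα : Continuous α) (C : ℝ)
    (hC : ∀ s, |α s| ≤ C) (ω : ℝ) (t : ℝ) (ht : t ∈ Set.Icc x0 x1) :
    harmE x0 t α ω = 1 + ∫ s in x0..t, (α s : ℂ)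
        * Complex.exp (2 * Complex.I * ((s : ℂ) - (x0 : ℂ)) * ω)
          * (starRingEnd ℂ) (harmE x0 s α ω) := by
  have hC0 : 0 ≤ C := (abs_nonneg _).trans (hC 0)
  have hsum : ∀ s ∈ Set.Icc x0 x1, Summable (fun j => Aiter x0 α ω j s) := fun s hs =>
    Summable.of_norm_bounded (Real.summable_pow_div_factorial _)
      (fun j => aiter_bound' x0 x1 α C hC ω j s hs)
  have key : HasSum (fun j => Aiter x0 α ω (j + 1) t) (∫ s in x0..t, (α s : ℂ)
        * Complex.exp (2 * Complex.I * ((s : ℂ) - (x0 : ℂ)) * ω)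
          * (starRingEnd ℂ) (harmE x0 s α ω)) := by
    simp only [Aiter]
    refine intervalIntegral.hasSum_integral_of_dominated_convergence
      (fun j _ => C * ((C * (x1 - x0)) ^ j / (j.factorial : ℝ))) ?_ ?_ ?_ ?_ ?_
    · intro j
      apply Continuous.aestronglyMeasurable
      have h2 : Continuous (fun s : ℝ => (starRingEnd ℂ) (Aiter x0 α ω j s)) :=
        Complex.continuous_conj.comp (aiter_cont x0 α hα ω j)
      fun_prop
    · intro j
      refine Filter.Eventually.of_forall fun s hs => ?_
      rw [Set.uIoc_of_le ht.1] at hs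
      rw [norm_mul, norm_mul, phase_norm, mul_one, RCLike.norm_conj, Complex.norm_real,
        Real.norm_eq_abs]
      exact mul_le_mul (hC s) (aiter_bound' x0 x1 α C hC ω j s ⟨hs.1.le, hs.2.trans ht.2⟩)
        (norm_nonneg _) hC0
    · exact Filter.Eventually.of_forall fun s hs =>
        (Real.summable_pow_div_factorial _).mul_left C
    · exact intervalIntegrable_const
    · refine Filter.Eventually.of_forall fun s hs => ?_
      rw [Set.uIoc_of_le ht.1] at hs
      exact (Complex.hasSum_conj'.mpr (by
        simpa [harmE] using (hsum s ⟨hs.1.le, hs.2.trans ht.2⟩).hasSum)).mul_left _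
  rw [← key.tsum_eq]
  unfold harmE
  rw [(hsum t ht).tsum_eq_zero_add]
  rfl

lemma harmE_integrable (x0 x1 : ℝ) (α : ℝ → ℝ) (hα : Continuous α) (C : ℝ)
    (hC : ∀ s, |α s| ≤ C) (ω : ℝ) (s t : ℝ) (hs : s ∈ Set.Icc x0 x1) (ht : t ∈ Set.Icc x0 x1) :
    IntervalIntegrable (fun s : ℝ => (α s : ℂ)
        * Complex.exp (2 * Complex.I * ((s : ℂ) - (x0 : ℂ)) * ω)
          * (starRingEnd ℂ) (harmE x0 s α ω)) volume s t := by
  apply ContinuousOn.intervalIntegrable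
  refine ContinuousOn.mono ?_ (Set.uIcc_subset_Icc hs ht)
  refine ContinuousOn.mul (by fun_prop) ?_
  exact Complex.continuous_conj.comp_continuousOn (harmE_cont x0 x1 α hα C hC ω)

lemma harmE_sub (x0 x1 : ℝ) (α : ℝ → ℝ) (hα : Continuous α) (C : ℝ)
    (hC : ∀ s, |α s| ≤ C) (ω : ℝ) (s t : ℝ) (hs : s ∈ Set.Icc x0 x1) (ht : t ∈ Set.Icc x0 x1) :
    harmE x0 t α ω - harmE x0 s α ω = ∫ s in s..t, (α s : ℂ)
        * Complex.exp (2 * Complex.I * ((s : ℂ) - (x0 : ℂ)) * ω)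
          * (starRingEnd ℂ) (harmE x0 s α ω) := by
  have h0 : x0 ∈ Set.Icc x0 x1 := ⟨le_rfl, hs.1.trans hs.2⟩
  rw [harmE_eq x0 x1 α hα C hC ω t ht, harmE_eq x0 x1 α hα C hC ω s hs,
    add_sub_add_left_eq_sub]
  exact intervalIntegral.integral_interval_sub_left
    (harmE_integrable x0 x1 α hα C hC ω x0 t h0 ht)
    (harmE_integrable x0 x1 α hα C hC ω x0 s h0 hs)

lemma harmE_lip (x0 x1 : ℝ) (α : ℝ → ℝ) (hα : Continuous α) (C : ℝ)
    (hC : ∀ s, |α s| ≤ C) (ω : ℝ) (s t : ℝ) (hs : s ∈ Set.Icc x0 x1) (ht : t ∈ Set.Icc x0 x1) :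
    ‖harmE x0 t α ω - harmE x0 s α ω‖ ≤ C * Real.exp (C * (x1 - x0)) * |t - s| := by
  have hC0 : 0 ≤ C := (abs_nonneg _).trans (hC 0)
  rw [harmE_sub x0 x1 α hα C hC ω s t hs ht]
  refine intervalIntegral.norm_integral_le_of_norm_le_const fun u hu => ?_
  rw [norm_mul, norm_mul, phase_norm, mul_one, RCLike.norm_conj, Complex.norm_real,
    Real.norm_eq_abs]
  exact mul_le_mul (hC u) (harmE_norm x0 x1 α C hC ω u
    (Set.uIcc_subset_Icc hs ht (Set.uIoc_subset_uIcc hu))) (norm_nonneg _) hC0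

lemma aiter_congr (x0 x1 : ℝ) (α β : ℝ → ℝ) (h : ∀ s ∈ Set.Icc x0 x1, α s = β s) (ω : ℂ)
    (j : ℕ) : ∀ t ∈ Set.Icc x0 x1, Aiter x0 α ω j t = Aiter x0 β ω j t := by
  induction j with
  | zero => intro t ht; rfl
  | succ j ih =>
    intro t ht
    simp only [Aiter]
    refine intervalIntegral.integral_congr fun s hs => ?_
    rw [Set.uIcc_of_le ht.1] at hs
    have hs' : s ∈ Set.Icc x0 x1 := ⟨hs.1, hs.2.trans ht.2⟩
    simp only [h s hs', ih s hs']

lemma opuc_dual (r : ℕ → ℝ) (z : ℂ) (hz : ‖z‖ = 1) (j : ℕ) :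
    (opucPsi r j).1 z = z ^ j * (starRingEnd ℂ) ((opucPsi r j).2 z) := by
  have hzz : z * (starRingEnd ℂ) z = 1 := by
    rw [Complex.mul_conj, Complex.normSq_eq_norm_sq, hz]; simp
  induction j with
  | zero => simp [opucPsi]
  | succ j ih =>
    have hp : z ^ j * (starRingEnd ℂ) z ^ j = 1 := by rw [← mul_pow, hzz, one_pow]
    simp only [opucPsi, ih, map_add, map_mul, map_pow, Complex.conj_conj, Complex.conj_ofReal]
    generalize (opucPsi r j).2 z = P
    linear_combination (-(r (j+1) : ℂ) * P) * hp
      - (r (j+1) : ℂ) * P * (z ^ j * (starRingEnd ℂ) z ^ j) * hzz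

lemma opuc_rec (r : ℕ → ℝ) (z : ℂ) (hz : ‖z‖ = 1) (j : ℕ) :
    (opucPsi r (j + 1)).2 z = (opucPsi r j).2 z
      + (r (j + 1) : ℂ) * z ^ (j + 1) * (starRingEnd ℂ) ((opucPsi r j).2 z) := by
  have := opuc_dual r z hz j
  simp only [opucPsi]
  rw [this]; ring

lemma disc_gronwall (u : ℕ → ℝ) (a b : ℝ) (ha : 0 ≤ a) (hb : 0 ≤ b) (n : ℕ) (h0 : u 0 ≤ 0)
    (h : ∀ j < n, u (j + 1) ≤ (1 + a) * u j + b) :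
    ∀ j ≤ n, u j ≤ j * b * (1 + a) ^ j := by
  intro j
  induction j with
  | zero => intro _; simpa using h0
  | succ j ih =>
    intro hj
    have h1 := ih (by omega)
    have h2 := h j (by omega)
    have h3 : (1 + a) * u j ≤ (1 + a) * (j * b * (1 + a) ^ j) := by gcongr
    have h4 : b * 1 ≤ b * (1 + a) ^ (j + 1) := by
      gcongr; exact one_le_pow₀ (by linarith)
    push_cast
    have h5 : ((j : ℝ) + 1) * b * (1 + a) ^ (j + 1)
      = (1 + a) * (j * b * (1 + a) ^ j) + b * (1 + a) ^ (j + 1) := by ring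
    linarith

/-- One step of the scheme: local truncation error. -/
lemma local_err (x0 x1 : ℝ) (α : ℝ → ℝ) (hα : Continuous α) (C : ℝ)
    (hC : ∀ s, |α s| ≤ C) (ω Ω : ℝ) (hω : |ω| ≤ Ω) (s D k e : ℝ) (hD : 0 ≤ D)
    (hs : s ∈ Set.Icc x0 x1) (ht : s + D ∈ Set.Icc x0 x1)
    (hk : ∀ u ∈ Set.Icc s (s + D), |k - α u| ≤ e) :
    ‖((D * k : ℝ) : ℂ) * Complex.exp (2 * Complex.I * (((s + D : ℝ) : ℂ) - (x0 : ℂ)) * ω)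
        * (starRingEnd ℂ) (harmE x0 s α ω) - (harmE x0 (s + D) α ω - harmE x0 s α ω)‖
      ≤ (e * Real.exp (C * (x1 - x0)) + C * (2 * Ω * D) * Real.exp (C * (x1 - x0))
          + C * (C * Real.exp (C * (x1 - x0)) * D)) * D := by
  have hC0 : 0 ≤ C := (abs_nonneg _).trans (hC 0)
  have he : 0 ≤ e := (abs_nonneg _).trans (hk s ⟨le_rfl, by linarith⟩)
  rw [harmE_sub x0 x1 α hα C hC ω s (s + D) hs ht]
  set M := Real.exp (C * (x1 - x0)) with hM
  set Z := (k : ℂ) * Complex.exp (2 * Complex.I * (((s + D : ℝ) : ℂ) - (x0 : ℂ)) * ω)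
        * (starRingEnd ℂ) (harmE x0 s α ω) with hZ
  have h1 : ((D * k : ℝ) : ℂ) * Complex.exp (2 * Complex.I * (((s + D : ℝ) : ℂ) - (x0 : ℂ)) * ω)
        * (starRingEnd ℂ) (harmE x0 s α ω) = ∫ u in s..(s + D), Z := by
    rw [intervalIntegral.integral_const, hZ, Complex.real_smul]
    push_cast; ring
  rw [h1, ← intervalIntegral.integral_sub intervalIntegrable_const
    (harmE_integrable x0 x1 α hα C hC ω s (s + D) hs ht)]
  have h2 : |s + D - s| = D := by rw [add_sub_cancel_left, abs_of_nonneg hD]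
  refine (intervalIntegral.norm_integral_le_of_norm_le_const
    (C := e * M + C * (2 * Ω * D) * M + C * (C * M * D)) fun u hu => ?_).trans
    (le_of_eq (by rw [h2]))
  rw [Set.uIoc_of_le (by linarith)] at hu
  have hu' : u ∈ Set.Icc s (s + D) := ⟨hu.1.le, hu.2⟩
  have hux : u ∈ Set.Icc x0 x1 := ⟨hs.1.trans hu'.1, hu'.2.trans ht.2⟩
  set F1 := Complex.exp (2 * Complex.I * (((s + D : ℝ) : ℂ) - (x0 : ℂ)) * ω) with hF1
  set F2 := Complex.exp (2 * Complex.I * ((u : ℂ) - (x0 : ℂ)) * ω) with hF2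
  have n1 : ‖F1‖ = 1 := phase_norm _ _ _
  have n2 : ‖F2‖ = 1 := phase_norm _ _ _
  have nF : ‖F1 - F2‖ ≤ 2 * Ω * D := by
    refine (phase_lip x0 ω (s + D) u).trans ?_
    have : |s + D - u| ≤ D := by rw [abs_of_nonneg (by linarith [hu.2])]; linarith [hu.1]
    have := abs_nonneg ω
    gcongr
    linarith
  have nE : ‖harmE x0 s α ω‖ ≤ M := harmE_norm x0 x1 α C hC ω s hs
  have nD : ‖harmE x0 s α ω - harmE x0 u α ω‖ ≤ C * M * D := by
    refine (harmE_lip x0 x1 α hα C hC ω u s hux hs).trans ?_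
    have : |s - u| ≤ D := by rw [abs_le]; constructor <;> linarith [hu.1, hu.2]
    have : 0 ≤ M := (Real.exp_pos _).le
    gcongr
  have dec : Z - (α u : ℂ) * F2 * (starRingEnd ℂ) (harmE x0 u α ω)
      = ((k - α u : ℝ) : ℂ) * F1 * (starRingEnd ℂ) (harmE x0 s α ω)
        + (α u : ℂ) * (F1 - F2) * (starRingEnd ℂ) (harmE x0 s α ω)
        + (α u : ℂ) * F2 * (starRingEnd ℂ) (harmE x0 s α ω - harmE x0 u α ω) := by
    rw [hZ, map_sub]; push_cast; ring
  rw [dec]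
  refine (norm_add₃_le).trans ?_
  simp only [norm_mul, n1, n2, mul_one, RCLike.norm_conj, Complex.norm_real, Real.norm_eq_abs]
  have := hk u hu'
  have := hC u
  have : 0 ≤ M := (Real.exp_pos _).le
  have : 0 ≤ Ω := (abs_nonneg _).trans hω
  gcongr

lemma refl_coeff (x0 x1 : ℝ) (ζ : ℝ → ℝ) (hζ : ContDiff ℝ 1 ζ)
    (hpos : ∀ x ∈ Set.Icc x0 x1, 0 < ζ x) (a b : ℝ) (hab : a < b)
    (ha : a ∈ Set.Icc x0 x1) (hb : b ∈ Set.Icc x0 x1) :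
    ∃ u ∈ Set.Icc a b, ∃ v ∈ Set.Icc a b,
      (ζ a - ζ b) / (ζ a + ζ b) = (b - a) * (-deriv ζ u / (2 * ζ v)) := by
  obtain ⟨u, hu, hu'⟩ := exists_deriv_eq_slope ζ hab hζ.continuous.continuousOn
    (hζ.differentiable (by norm_num)).differentiableOn
  have hmid : (ζ a + ζ b) / 2 ∈ ζ '' Set.uIcc a b := by
    apply intermediate_value_uIcc hζ.continuous.continuousOn
    rw [Set.mem_uIcc]
    rcases le_total (ζ a) (ζ b) with h | h
    · left; constructor <;> linarith
    · right; constructor <;> linarith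
  obtain ⟨v, hv, hv'⟩ := hmid
  rw [Set.uIcc_of_le hab.le] at hv
  refine ⟨u, ⟨hu.1.le, hu.2.le⟩, v, hv, ?_⟩
  rw [hv', hu']
  have h1 := hpos a ha
  have h2 := hpos b hb
  have h3 : b - a ≠ 0 := by linarith
  have h4 : ζ a + ζ b ≠ 0 := by linarith
  field_simp
  ring

/-- The second singular approximation lemma (lem-singular-approximation) combined with
Proposition prop-opuc(i): the dual OPUC of the standard step approximants, evaluated at
`e^{2iΔ_n ω}`, converge to the harmonic exponential `E_α^{(x0,x1)}` uniformly on compact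
subsets of `ℝ`. -/
theorem opuc_converges_to_harmonic_exponential
    (x0 x1 : ℝ) (hx : x0 < x1)
    (ζ : ℝ → ℝ) (hζ : ContDiff ℝ 1 ζ)
    (hpos : ∀ x ∈ Set.Icc x0 x1, 0 < ζ x)
    (α : ℝ → ℝ) (hα : ∀ x, α x = -deriv ζ x / (2 * ζ x))
    (Δ : ℕ → ℝ) (hΔ : ∀ n : ℕ, Δ n = (x1 - x0) / (n + 1))
    (yy : ℕ → ℕ → ℝ) (hyy : ∀ n j : ℕ, yy n j = x0 + j * Δ n)
    (r : ℕ → ℕ → ℝ)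
    (hr : ∀ n j : ℕ,
      r n j = (ζ (yy n j - Δ n / 2) - ζ (yy n j + Δ n / 2))
              / (ζ (yy n j - Δ n / 2) + ζ (yy n j + Δ n / 2))) :
    ∀ Ω : ℝ, 0 < Ω →
      TendstoUniformlyOn
        (fun (n : ℕ) (ω : ℝ) =>
          (opucPsi (r n) n).2 (Complex.exp (2 * Complex.I * (Δ n : ℂ) * (ω : ℂ))))
        (fun ω : ℝ => harmE x0 x1 α (ω : ℂ))
        Filter.atTop (Set.Icc (-Ω) Ω) := by
  intro Ω hΩ
  set L := x1 - x0 with hL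
  have hLpos : 0 < L := by linarith
  -- the two-variable version of `α`
  let h : ℝ × ℝ → ℝ := fun p => -deriv ζ p.1 / (2 * ζ p.2)
  have hdc : Continuous (deriv ζ) := hζ.continuous_deriv (by norm_num)
  have hhc : ContinuousOn h (Set.Icc x0 x1 ×ˢ Set.Icc x0 x1) := by
    refine ContinuousOn.div (by fun_prop) ?_ ?_
    · have := hζ.continuous; fun_prop
    · intro p hp
      have := hpos p.2 hp.2
      positivity
  have hcomp : IsCompact (Set.Icc x0 x1 ×ˢ Set.Icc x0 x1) := isCompact_Icc.prod isCompact_Icc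
  obtain ⟨C, hCb⟩ := hcomp.exists_bound_of_continuousOn hhc
  have huc := hcomp.uniformContinuousOn_of_continuous hhc
  -- continuous extension of `α`
  have hαc : ContinuousOn α (Set.Icc x0 x1) := by
    have : α = fun x => -deriv ζ x / (2 * ζ x) := funext hα
    rw [this]
    refine ContinuousOn.div (by fun_prop) ?_ ?_
    · have := hζ.continuous; fun_prop
    · intro p hp
      have := hpos p hp
      positivity
  let β : ℝ → ℝ := Set.IccExtend hx.le ((Set.Icc x0 x1).domRestrict α)
  have hβc : Continuous β := hαc.domRestrict.Icc_extend'
  have hβα : ∀ s ∈ Set.Icc x0 x1, α s = β s := fun s hs =>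
    (Set.IccExtend_of_mem hx.le ((Set.Icc x0 x1).domRestrict α) hs).symm
  have hβC : ∀ s, |β s| ≤ C := by
    intro s
    have hm := (Set.projIcc x0 x1 hx.le s).2
    have : β s = h ((Set.projIcc x0 x1 hx.le s : ℝ), (Set.projIcc x0 x1 hx.le s : ℝ)) := by
      exact hα _
    rw [this]
    exact hCb _ ⟨hm, hm⟩
  have hC0 : 0 ≤ C := (abs_nonneg _).trans (hβC 0)
  have hE : ∀ ω : ℂ, harmE x0 x1 α ω = harmE x0 x1 β ω := fun ω =>
    tsum_congr fun j => aiter_congr x0 x1 α β hβα ω j x1 ⟨hx.le, le_rfl⟩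
  set M := Real.exp (C * L) with hM
  have hMpos : 0 < M := Real.exp_pos _
  rw [Metric.tendstoUniformlyOn_iff]
  intro ε hε
  set K1 := L * M * M with hK1
  set K2 := L * M * (C * (2 * Ω) * M + C * (C * M)) + C * M with hK2
  have hK1p : 0 ≤ K1 := by positivity
  have hK2p : 0 ≤ K2 := by positivity
  set e := ε / (2 * (K1 + 1)) with he
  have hep : 0 < e := by positivity
  obtain ⟨δ, hδ, hδh⟩ := Metric.uniformContinuousOn_iff.mp huc e hep
  have hΔlim : Filter.Tendsto Δ Filter.atTop (nhds 0) := by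
    have : Δ = fun n : ℕ => L / ((n : ℝ) + 1) := funext hΔ
    rw [this]
    have h1 := (tendsto_one_div_add_atTop_nhds_zero_nat (𝕜 := ℝ)).const_mul L
    rw [mul_zero] at h1
    exact h1.congr fun n => by ring
  have hev1 : ∀ᶠ n in Filter.atTop, Δ n < δ / 2 := hΔlim.eventually_lt_const (by positivity)
  have hev2 : ∀ᶠ n in Filter.atTop, Δ n < ε / (2 * (K2 + 1)) :=
    hΔlim.eventually_lt_const (by positivity)
  filter_upwards [hev1, hev2] with n hn1 hn2
  intro ω hω
  have hωΩ : |ω| ≤ Ω := abs_le.mpr hω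
  set D := Δ n with hD
  have hDpos : 0 < D := by rw [hD, hΔ]; positivity
  have hDn : ((n : ℝ) + 1) * D = L := by
    rw [hD, hΔ]; field_simp
  set z := Complex.exp (2 * Complex.I * (D : ℂ) * (ω : ℂ)) with hz
  have hz1 : ‖z‖ = 1 := by
    have := phase_norm 0 ω D
    simpa [hz] using this
  have hmem : ∀ j : ℕ, j ≤ n + 1 → x0 + j * D ∈ Set.Icc x0 x1 := by
    intro j hj
    have h1 : (j : ℝ) ≤ (n : ℝ) + 1 := by exact_mod_cast hj
    have h2 : (j : ℝ) * D ≤ ((n : ℝ) + 1) * D := by gcongr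
    have h3 : 0 ≤ (j : ℝ) * D := by positivity
    constructor <;> linarith
  -- the coefficients
  have hrk : ∀ j < n, ∃ k : ℝ, r n (j + 1) = D * k ∧ |k| ≤ C ∧
      ∀ u ∈ Set.Icc (x0 + j * D) (x0 + j * D + D), |k - β u| ≤ e := by
    intro j hj
    have hj0 := hmem j (by omega)
    have hj1 := hmem (j + 1) (by omega)
    have hj2 := hmem (j + 2) (by omega)
    push_cast at hj1 hj2
    have hsub : Set.Icc (x0 + (j + 1) * D - D / 2) (x0 + (j + 1) * D + D / 2)
        ⊆ Set.Icc x0 x1 := by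
      intro u hu
      constructor <;> linarith [hu.1, hu.2, hj0.1, hj2.2]
    obtain ⟨u, hu, v, hv, huv⟩ := refl_coeff x0 x1 ζ hζ hpos
      (x0 + (j + 1) * D - D / 2) (x0 + (j + 1) * D + D / 2) (by linarith)
      (hsub ⟨le_rfl, by linarith⟩) (hsub ⟨by linarith, le_rfl⟩)
    refine ⟨h (u, v), ?_, hCb _ ⟨hsub hu, hsub hv⟩, ?_⟩
    · rw [hr, hyy]
      push_cast
      rw [← hD, huv]
      ring
    · intro w hw
      have hwx : w ∈ Set.Icc x0 x1 := by
        constructor <;> linarith [hw.1, hw.2, hj0.1, hj1.2]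
      have hβw : β w = h (w, w) := by rw [← hβα w hwx, hα]
      rw [hβw, ← Real.dist_eq]
      refine (hδh (u, v) ⟨hsub hu, hsub hv⟩ (w, w) ⟨hwx, hwx⟩ ?_).le
      rw [Prod.dist_eq, max_lt_iff, Real.dist_eq, Real.dist_eq, abs_lt, abs_lt]
      refine ⟨⟨?_, ?_⟩, ?_, ?_⟩ <;> simp only <;>
        linarith [hu.1, hu.2, hv.1, hv.2, hw.1, hw.2]
  -- global error
  set b := (e * M + C * (2 * Ω * D) * M + C * (C * M * D)) * D with hb
  have hb0 : 0 ≤ b := by positivity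
  let P : ℕ → ℂ := fun j => (opucPsi (r n) j).2 z
  let E : ℝ → ℂ := fun t => harmE x0 t β ω
  have hgron := disc_gronwall (fun j => ‖P j - E (x0 + j * D)‖) (C * D) b (by positivity) hb0 n
    (by
      have h0 : E x0 = 1 := by
        have := harmE_eq x0 x1 β hβc C hβC ω x0 ⟨le_rfl, hx.le⟩
        simpa using this
      simp [P, opucPsi, h0])
    (by
      intro j hj
      obtain ⟨k, hk1, hk2, hk3⟩ := hrk j hj
      have hstep := opuc_rec (r n) z hz1 j
      have hm1 := hmem (j + 1) (by omega)
      have hcast : x0 + ((j + 1 : ℕ) : ℝ) * D = x0 + j * D + D := by push_cast; ring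
      rw [hcast] at hm1
      have hloc := local_err x0 x1 β hβc C hβC ω Ω hωΩ (x0 + j * D) D k e hDpos.le
        (hmem j (by omega)) hm1 hk3
      have hzp : z ^ (j + 1) = Complex.exp (2 * Complex.I *
          (((x0 + j * D + D : ℝ) : ℂ) - (x0 : ℂ)) * ω) := by
        rw [hz, ← Complex.exp_nat_mul]
        congr 1; push_cast; ring
      rw [← hzp] at hloc
      simp only [hcast]
      have hdec : P (j + 1) - E (x0 + j * D + D)
          = (P j - E (x0 + j * D))
            + ((D * k : ℝ) : ℂ) * z ^ (j + 1) * (starRingEnd ℂ) (P j - E (x0 + j * D))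
            + (((D * k : ℝ) : ℂ) * z ^ (j + 1) * (starRingEnd ℂ) (E (x0 + j * D))
              - (E (x0 + j * D + D) - E (x0 + j * D))) := by
        simp only [P]
        rw [hstep, hk1, map_sub]
        ring
      rw [hdec]
      refine (norm_add₃_le).trans ?_
      have h2 : ‖((D * k : ℝ) : ℂ) * z ^ (j + 1) * (starRingEnd ℂ) (P j - E (x0 + j * D))‖
          ≤ C * D * ‖P j - E (x0 + j * D)‖ := by
        rw [norm_mul, norm_mul, norm_pow, hz1, one_pow, mul_one, RCLike.norm_conj,
          Complex.norm_real, Real.norm_eq_abs, abs_mul, abs_of_pos hDpos, mul_comm D]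
        gcongr
      have h3 := add_le_add (add_le_add (le_refl ‖P j - E (x0 + j * D)‖) h2) hloc
      refine h3.trans (le_of_eq ?_)
      rw [hb]; ring)
    n le_rfl
  have hlast := harmE_lip x0 x1 β hβc C hβC ω (x0 + n * D) x1 (hmem n (by omega)) ⟨hx.le, le_rfl⟩
  have hlast' : x1 - (x0 + n * D) = D := by linarith
  rw [hlast', abs_of_pos hDpos] at hlast
  have hnD : (n : ℝ) * D ≤ L := by linarith
  have hpow : (1 + C * D) ^ n ≤ M := by
    have h1 : 1 + C * D ≤ Real.exp (C * D) := by linarith [Real.add_one_le_exp (C * D)]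
    calc (1 + C * D) ^ n ≤ Real.exp (C * D) ^ n := by gcongr
      _ = Real.exp (C * (n * D)) := by rw [← Real.exp_nat_mul]; congr 1; ring
      _ ≤ M := by rw [hM]; gcongr
  have hfin : ‖P n - E (x0 + n * D)‖
      ≤ L * (e * M + C * (2 * Ω * D) * M + C * (C * M * D)) * M := by
    refine hgron.trans ?_
    have h1 : (n : ℝ) * b = (n * D) * (e * M + C * (2 * Ω * D) * M + C * (C * M * D)) := by
      rw [hb]; ring
    rw [h1]
    gcongr
  rw [hE, dist_eq_norm]
  have htri : ‖harmE x0 x1 β ω - P n‖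
      ≤ ‖harmE x0 x1 β ω - E (x0 + n * D)‖ + ‖P n - E (x0 + n * D)‖ := by
    rw [norm_sub_rev (P n)]
    exact norm_sub_le_norm_sub_add_norm_sub _ _ _
  have htot : ‖harmE x0 x1 β ω - P n‖ ≤ K1 * e + K2 * D := by
    refine htri.trans ((add_le_add hlast hfin).trans (le_of_eq ?_))
    rw [hK1, hK2, hM, hL]; ring
  have f1 : K1 * e < ε / 2 := by
    rw [he, ← mul_div_assoc, div_lt_div_iff₀ (by positivity) (by positivity)]
    nlinarith
  have f2 : K2 * D ≤ ε / 2 := by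
    have : K2 * D ≤ K2 * (ε / (2 * (K2 + 1))) := by gcongr
    refine this.trans ?_
    rw [← mul_div_assoc, div_le_div_iff₀ (by positivity) (by positivity)]
    nlinarith
  exact lt_of_le_of_lt htot (by linarith)
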